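/- arXiv:1401.6260 — 2 statements merged into one kernel-verified Lean document; each statement's English description precedes it below -/
import Mathlib

section
/- If a protocol sequence set s_1, …, s_K is SI, then for every MPR capability γ with 1 ≤ γ < K the set is TI with MPR capability γ, i.e., for every user i the throughput R_i(τ_1,…,τ_K) is a constant function of the shifts (τ_1,…,τ_K). -/
open Finset

/-- Generalized Hamming cross-correlation of the sequences indexed by `A`
(only the shifts `τ j` with `j ∈ A` matter). -/
def Hcorr {K L : ℕ} [NeZero L] (s : Fin K → ZMod L → ℕ)
    (A : Finset (Fin K)) (τ : Fin K → ZMod L) : ℕ :=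
  ∑ t : ZMod L, ∏ j ∈ A, s j (t + τ j)

/-- The family `s` is shift-invariant (SI): every generalized Hamming
cross-correlation is independent of the relative shifts. -/
def IsSI {K L : ℕ} [NeZero L] (s : Fin K → ZMod L → ℕ) : Prop :=
  ∀ A : Finset (Fin K), A.Nonempty →
    ∀ τ τ' : Fin K → ZMod L, Hcorr s A τ = Hcorr s A τ'

/-- Number of slots `t` in one period where user `i` transmits and at most
`γ - 1` other users transmit. -/
def Rcount {K L : ℕ} [NeZero L] (s : Fin K → ZMod L → ℕ) (γ : ℕ)
    (i : Fin K) (τ : Fin K → ZMod L) : ℕ :=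
  (Finset.univ.filter (fun t : ZMod L =>
    s i (t + τ i) = 1 ∧ ∑ j ∈ Finset.univ.erase i, s j (t + τ j) ≤ γ - 1)).card

/-- Throughput of user `i` under MPR capability `γ` at shifts `τ`. -/
def R {K L : ℕ} [NeZero L] (s : Fin K → ZMod L → ℕ) (γ : ℕ)
    (i : Fin K) (τ : Fin K → ZMod L) : ℚ :=
  (Rcount s γ i τ : ℚ) / L

/-- The family `s` is throughput-invariant (TI) with MPR capability `γ`. -/
def IsTI {K L : ℕ} [NeZero L] (s : Fin K → ZMod L → ℕ) (γ : ℕ) : Prop :=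
  ∀ i : Fin K, ∀ τ τ' : Fin K → ZMod L, R s γ i τ = R s γ i τ'

/-- Duty factor of a single sequence. -/
def duty {L : ℕ} [NeZero L] (s : ZMod L → ℕ) : ℚ :=
  (∑ t : ZMod L, (s t : ℚ)) / L

/-!
Record, for each slot, the set of users transmitting in it. For binary sequences the
cross-correlation over `A` counts the slots whose active set contains `A`, and a finite multiset in
a partial order is determined by how many of its elements lie at or above each point (recover the
multiplicities from the top down). Hence shift invariance forces the multiset of active sets to be
independent of the shifts, and the throughput of a user depends only on this multiset.
-/

theorem countP_le_eq_countP_lt_add_count {α : Type*} [PartialOrder α] [DecidableLE α]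
    [DecidableLT α] [DecidableEq α] (m : Multiset α) (a : α) :
    m.countP (a ≤ ·) = m.countP (a < ·) + m.count a := by
  have h_disjoint : m.filter (fun b => a < b ∧ a = b) = 0 :=
    Multiset.filter_eq_nil.2 fun _ _ h => h.1.ne h.2
  simp only [Multiset.count, Multiset.countP_eq_card_filter, ← Multiset.card_add,
    Multiset.filter_add_filter, h_disjoint, add_zero, ← le_iff_lt_or_eq]

theorem multiset_eq_of_countP_le_eq {α : Type*} [PartialOrder α] [DecidableLE α]
    {m n : Multiset α} (h : ∀ a, m.countP (a ≤ ·) = n.countP (a ≤ ·)) : m = n := by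
  classical
  by_contra hne
  let D : Finset α := {a ∈ m.toFinset ∪ n.toFinset | m.count a ≠ n.count a}
  have mem_D {a : α} : a ∈ D ↔ m.count a ≠ n.count a := by
    simp only [D, mem_filter, mem_union, Multiset.mem_toFinset, ← Multiset.count_pos]
    omega
  have hD : D.Nonempty := by
    obtain ⟨a, ha⟩ := not_forall.1 (mt Multiset.ext.2 hne)
    exact ⟨a, mem_D.2 ha⟩
  obtain ⟨a, ha⟩ := D.exists_maximal hD
  have h_above : m.filter (a < ·) = n.filter (a < ·) := by
    ext b
    by_cases hab : a < b
    · have hb : b ∉ D := fun hb => ha.not_gt hb hab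
      simpa [hab, mem_D] using hb
    · simp [hab]
  have h_count : m.count a = n.count a := by
    have h_le := h a
    rw [countP_le_eq_countP_lt_add_count, countP_le_eq_countP_lt_add_count,
      Multiset.countP_eq_card_filter, h_above, ← Multiset.countP_eq_card_filter] at h_le
    exact Nat.add_left_cancel h_le
  exact mem_D.1 ha.prop h_count

section ZeroOne

variable {ι M : Type*} {x : ι → M} {A : Finset ι}

theorem prod_eq_ite_of_eq_zero_or_one [CommMonoidWithZero M]
    [Decidable (∀ j ∈ A, x j = 1)] (hx : ∀ j ∈ A, x j = 0 ∨ x j = 1) :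
    ∏ j ∈ A, x j = if ∀ j ∈ A, x j = 1 then 1 else 0 := by
  split_ifs with h
  · exact prod_eq_one h
  · push Not at h
    obtain ⟨j, hj, hj_ne⟩ := h
    exact prod_eq_zero hj ((hx j hj).resolve_right hj_ne)

theorem sum_eq_card_filter_of_eq_zero_or_one [AddCommMonoidWithOne M] [DecidableEq M]
    (hx : ∀ j ∈ A, x j = 0 ∨ x j = 1) :
    ∑ j ∈ A, x j = #{j ∈ A | x j = 1} := by
  rw [← sum_filter_of_ne fun j hj => (hx j hj).resolve_left,
    sum_congr rfl fun j hj => (mem_filter.1 hj).2, sum_const, nsmul_one]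

end ZeroOne

section ProtocolSequences

variable {K L : ℕ} {s : Fin K → ZMod L → ℕ}

/-- The set of users transmitting in slot `t` when user `j` is shifted by `τ j`. -/
def activeSet (s : Fin K → ZMod L → ℕ) (τ : Fin K → ZMod L) (t : ZMod L) : Finset (Fin K) :=
  {j | s j (t + τ j) = 1}

theorem mem_activeSet {τ : Fin K → ZMod L} {t : ZMod L} {j : Fin K} :
    j ∈ activeSet s τ t ↔ s j (t + τ j) = 1 :=
  mem_filter_univ j

variable [NeZero L]

/-- The active sets of the slots of one period, with multiplicity and regardless of their order:
the joint distribution of the users' activity at the shifts `τ`. -/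
def activityPatterns (s : Fin K → ZMod L → ℕ) (τ : Fin K → ZMod L) :
    Multiset (Finset (Fin K)) :=
  univ.val.map (activeSet s τ)

theorem countP_activityPatterns (P : Finset (Fin K) → Prop) [DecidablePred P]
    (τ : Fin K → ZMod L) :
    (activityPatterns s τ).countP P = #{t | P (activeSet s τ t)} :=
  Multiset.countP_map ..

theorem Hcorr_eq_countP (hbin : ∀ i t, s i t = 0 ∨ s i t = 1) (A : Finset (Fin K))
    (τ : Fin K → ZMod L) : Hcorr s A τ = (activityPatterns s τ).countP (A ≤ ·) := by
  rw [countP_activityPatterns, card_filter]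
  refine sum_congr rfl fun t _ => ?_
  have h_subset : A ⊆ activeSet s τ t ↔ ∀ j ∈ A, s j (t + τ j) = 1 := by
    simp only [subset_iff, mem_activeSet]
  simp only [h_subset, prod_eq_ite_of_eq_zero_or_one fun j _ => hbin j (t + τ j)]

theorem IsSI.activityPatterns_eq (hSI : IsSI s) (hbin : ∀ i t, s i t = 0 ∨ s i t = 1)
    (τ τ' : Fin K → ZMod L) : activityPatterns s τ = activityPatterns s τ' := by
  refine multiset_eq_of_countP_le_eq fun A => ?_
  rw [← Hcorr_eq_countP hbin, ← Hcorr_eq_countP hbin]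
  obtain rfl | hA := A.eq_empty_or_nonempty
  · simp only [Hcorr, prod_empty]
  · exact hSI A hA τ τ'

theorem Rcount_eq_countP (hbin : ∀ i t, s i t = 0 ∨ s i t = 1) (γ : ℕ) (i : Fin K)
    (τ : Fin K → ZMod L) :
    Rcount s γ i τ =
      (activityPatterns s τ).countP fun S => i ∈ S ∧ #(S.erase i) ≤ γ - 1 := by
  have h_others (t : ZMod L) :
      ∑ j ∈ univ.erase i, s j (t + τ j) = #((activeSet s τ t).erase i) := by
    rw [sum_eq_card_filter_of_eq_zero_or_one fun j _ => hbin j (t + τ j), filter_erase,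
      activeSet, Nat.cast_id]
  simp only [countP_activityPatterns, Rcount, h_others, mem_activeSet]

end ProtocolSequences

theorem stmt6 (K L : ℕ) (hK : 2 ≤ K) (hL : 1 ≤ L) [NeZero L]
    (s : Fin K → ZMod L → ℕ) (hbin : ∀ i t, s i t = 0 ∨ s i t = 1)
    (hSI : IsSI s) :
    ∀ γ : ℕ, 1 ≤ γ → γ < K →
      ∀ (i : Fin K) (τ τ' : Fin K → ZMod L), R s γ i τ = R s γ i τ' := by
  intro γ _ _ i τ τ'
  rw [R, R, Rcount_eq_countP hbin, Rcount_eq_countP hbin, hSI.activityPatterns_eq hbin τ τ']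
end

section
/- Let S = {s_1,…,s_K} (K ≥ 2) be a protocol sequence set. If S is TI with MPR capability γ = K−1 and R_i > 0 for every user i, then S is SI. -/
open Finset

/-!
With `γ = K - 1`, a transmission of user `i` fails exactly when all users transmit at once, so the
throughput count of any single user and the full cross-correlation add up to the weight (number of
ones) of that user's sequence. Invariance of the throughput therefore gives invariance of the
cross-correlation of all `K` sequences. Summing a cross-correlation over all values of one shift
`τ j` yields the weight of `s j` times the cross-correlation of the remaining sequences; as the
weights are nonzero, invariance passes from any set of users to all of its subsets.
-/

section FiniteSums

variable {ι : Type*}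

theorem sum_lt_card_iff_prod_eq_zero {A : Finset ι} {u : ι → ℕ} (hu : ∀ k ∈ A, u k ≤ 1) :
    ∑ k ∈ A, u k < #A ↔ ∏ k ∈ A, u k = 0 := by
  rw [card_eq_sum_ones, prod_eq_zero_iff]
  constructor
  · intro h
    obtain ⟨k, hk, hlt⟩ := exists_lt_of_sum_lt h
    exact ⟨k, hk, Nat.lt_one_iff.mp hlt⟩
  · rintro ⟨k, hk, hzero⟩
    exact sum_lt_sum hu ⟨k, hk, Nat.lt_one_iff.mpr hzero⟩

theorem sum_sum_prod_insert_add_update [DecidableEq ι] {G S : Type*} [AddGroup G] [Fintype G]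
    [CommSemiring S] (f : ι → G → S) {A : Finset ι} {j : ι} (hj : j ∉ A) (τ : ι → G) :
    ∑ x, ∑ t, ∏ k ∈ insert j A, f k (t + Function.update τ j x k) =
      (∑ x, f j x) * ∑ t, ∏ k ∈ A, f k (t + τ k) := by
  have split (x t : G) : ∏ k ∈ insert j A, f k (t + Function.update τ j x k) =
      f j (t + x) * ∏ k ∈ A, f k (t + τ k) := by
    rw [prod_insert hj, Function.update_self]
    congr 1
    refine prod_congr rfl fun k hk => ?_
    rw [Function.update_of_ne (ne_of_mem_of_not_mem hk hj)]
  calc ∑ x, ∑ t, ∏ k ∈ insert j A, f k (t + Function.update τ j x k)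
      = ∑ t, ∑ x, f j (t + x) * ∏ k ∈ A, f k (t + τ k) := by simp only [split]; exact sum_comm
    _ = ∑ t, (∑ x, f j x) * ∏ k ∈ A, f k (t + τ k) := by
        refine sum_congr rfl fun t _ => ?_
        rw [← sum_mul]
        exact congrArg (· * _) (Equiv.sum_comp (Equiv.addLeft t) (f j))
    _ = (∑ x, f j x) * ∑ t, ∏ k ∈ A, f k (t + τ k) := (mul_sum ..).symm

end FiniteSums

section ProtocolSequences

variable {K L : ℕ} [NeZero L] {s : Fin K → ZMod L → ℕ}

/-- The cross-correlation of the sequences indexed by `A` does not depend on the shifts: the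
condition that `IsSI` imposes on each nonempty set of users, isolated so that it can be passed from
one set to another. -/
def IsShiftInvariantOn (s : Fin K → ZMod L → ℕ) (A : Finset (Fin K)) : Prop :=
  ∀ τ τ' : Fin K → ZMod L, Hcorr s A τ = Hcorr s A τ'

theorem sum_hcorr_insert_update (s : Fin K → ZMod L → ℕ) {A : Finset (Fin K)} {j : Fin K}
    (hj : j ∉ A) (τ : Fin K → ZMod L) :
    ∑ x, Hcorr s (insert j A) (Function.update τ j x) = (∑ x, s j x) * Hcorr s A τ :=
  sum_sum_prod_insert_add_update s hj τ

theorem IsShiftInvariantOn.of_insert {A : Finset (Fin K)} {j : Fin K}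
    (h : IsShiftInvariantOn s (insert j A)) (hs : s j ≠ 0) : IsShiftInvariantOn s A := by
  by_cases hj : j ∈ A
  · rwa [insert_eq_of_mem hj] at h
  intro τ τ'
  have weight_ne_zero : ∑ x, s j x ≠ 0 := by
    simpa [sum_eq_zero_iff, funext_iff] using hs
  apply mul_left_cancel₀ weight_ne_zero
  rw [← sum_hcorr_insert_update s hj, ← sum_hcorr_insert_update s hj]
  exact sum_congr rfl fun x _ => h _ _

theorem IsShiftInvariantOn.subset {A B : Finset (Fin K)} (h : IsShiftInvariantOn s B)
    (hAB : A ⊆ B) (hs : ∀ j ∈ B \ A, s j ≠ 0) : IsShiftInvariantOn s A := by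
  rw [← sdiff_union_of_subset hAB] at h
  generalize B \ A = C at h hs
  induction C using Finset.induction_on with
  | empty => rwa [empty_union] at h
  | insert j C _ ih =>
    rw [insert_union] at h
    exact ih (h.of_insert (hs j (mem_insert_self j C))) fun k hk => hs k (mem_insert_of_mem hk)

theorem ne_zero_of_r_pos {γ : ℕ} {i : Fin K} {τ : Fin K → ZMod L} (h : 0 < R s γ i τ) :
    s i ≠ 0 := by
  intro hzero
  simp [R, Rcount, hzero] at h

theorem r_eq_r_iff {γ : ℕ} {i : Fin K} {τ τ' : Fin K → ZMod L} :
    R s γ i τ = R s γ i τ' ↔ Rcount s γ i τ = Rcount s γ i τ' := by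
  have hL : (L : ℚ) ≠ 0 := NeZero.ne _
  rw [R, R, div_left_inj' hL, Nat.cast_inj]

theorem rcount_add_hcorr_univ (hK : 2 ≤ K) (hbin : ∀ i t, s i t = 0 ∨ s i t = 1) (i : Fin K)
    (τ : Fin K → ZMod L) : Rcount s (K - 1) i τ + Hcorr s univ τ = ∑ x, s i x := by
  rw [← Equiv.sum_comp (Equiv.addRight (τ i)) (s i), Rcount, Hcorr, card_filter, ← sum_add_distrib]
  refine sum_congr rfl fun t _ => ?_
  rw [← mul_prod_erase univ _ (mem_univ i), Equiv.coe_addRight]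
  have le_one : ∀ k ∈ univ.erase i, s k (t + τ k) ≤ 1 := fun k _ => by
    rcases hbin k (t + τ k) with h | h <;> simp [h]
  have received_iff : ∑ k ∈ univ.erase i, s k (t + τ k) ≤ K - 1 - 1 ↔
      ∏ k ∈ univ.erase i, s k (t + τ k) = 0 := by
    rw [← sum_lt_card_iff_prod_eq_zero le_one, card_erase_of_mem (mem_univ i), card_fin]
    omega
  have prod_le_one : ∏ k ∈ univ.erase i, s k (t + τ k) ≤ 1 := prod_le_one' le_one
  simp only [received_iff]
  rcases hbin i (t + τ i) with h | h
  · simp [h]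
  · rcases Nat.le_one_iff_eq_zero_or_eq_one.mp prod_le_one with hprod | hprod <;> simp [h, hprod]

theorem isShiftInvariantOn_univ_of_r_eq (hK : 2 ≤ K) (hbin : ∀ i t, s i t = 0 ∨ s i t = 1)
    {i : Fin K} (hinv : ∀ τ τ' : Fin K → ZMod L, R s (K - 1) i τ = R s (K - 1) i τ') :
    IsShiftInvariantOn s univ := by
  intro τ τ'
  have same_sum : Rcount s (K - 1) i τ + Hcorr s univ τ =
      Rcount s (K - 1) i τ' + Hcorr s univ τ' := by
    rw [rcount_add_hcorr_univ hK hbin, rcount_add_hcorr_univ hK hbin]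
  rw [r_eq_r_iff.mp (hinv τ τ')] at same_sum
  exact Nat.add_left_cancel same_sum

end ProtocolSequences

theorem stmt17_general {K L : ℕ} (hK : 2 ≤ K) [NeZero L] {s : Fin K → ZMod L → ℕ}
    (hbin : ∀ i t, s i t = 0 ∨ s i t = 1) {i : Fin K}
    (hinv : ∀ τ τ' : Fin K → ZMod L, R s (K - 1) i τ = R s (K - 1) i τ')
    (hs : ∀ j, s j ≠ 0) : IsSI s :=
  fun A _ => (isShiftInvariantOn_univ_of_r_eq hK hbin hinv).subset (subset_univ A) fun j _ => hs j

theorem stmt17 (K L : ℕ) (hK : 2 ≤ K) (hL : 1 ≤ L) [NeZero L]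
    (s : Fin K → ZMod L → ℕ) (hbin : ∀ i t, s i t = 0 ∨ s i t = 1)
    (hTI : IsTI s (K - 1))
    (hR : ∀ (i : Fin K) (τ : Fin K → ZMod L), 0 < R s (K - 1) i τ) :
    IsSI s :=
  stmt17_general hK hbin (hTI ⟨0, by omega⟩) fun j => ne_zero_of_r_pos (hR j 0)
end
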